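/- Let (A,+) be a finite abelian group, Z a proper subset of A, and N = A \ Z (so N is nonempty), with stabilizer H(N) = {g ∈ A : g + N = N}. If t is the maximum length of a Z-independent sequence of distinct elements of A, then (t − 1)·|N| ≥ |A| − |H(N)|. -/

import Mathlib

open Function Set

/-- A sequence `α₁, …, α_t` in `A` is `Z`-independent if there are `ψ₁, …, ψ_t` in `A`
with `ψ_i + α_i ∉ Z` for all `i` and `ψ_i + α_j ∈ Z` for all `j < i`. -/
def ZIndepSeq {A : Type*} [AddCommGroup A] (Z : Set A) {t : ℕ} (α : Fin t → A) : Prop :=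
  ∃ ψ : Fin t → A, (∀ i, ψ i + α i ∉ Z) ∧ ∀ i j : Fin t, j < i → ψ i + α j ∈ Z

/-!
In a longest `Z`-independent sequence `α₁, …, α_{n+1}`, the last witness `ψ_{n+1}` lies in
`U = {x | x + α₁, …, x + α_n ∈ Z}`. If `c, d ∈ U` and `c + a ∉ Z` while `d + a ∈ Z`, then
`α₁, …, α_n` could be extended first by `a` with witness `c` and then once more with witness `d`,
contradicting maximality. So any two elements of `U` differ by an element of `H(N)`, whence
`|U| ≤ |H(N)|`; and the complement of `U` is a union of `n` translates of `N`.
-/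

section

open scoped Cardinal Pointwise

/-- Regarding each `α i` as the function `x ↦ x + α i`, with the values in `Z` counting as zero,
this is the common zero set of the family `α`. A `Z`-independent sequence can be extended exactly
by means of a witness in this set. -/
def commonZeros {ι A : Type*} [Add A] (Z : Set A) (α : ι → A) : Set A :=
  {x | ∀ i, x + α i ∈ Z}

theorem mem_commonZeros_snoc {A : Type*} [Add A] {Z : Set A} {n : ℕ} {α : Fin n → A} {a x : A} :
    x ∈ commonZeros Z (Fin.snoc α a : Fin (n + 1) → A) ↔ x ∈ commonZeros Z α ∧ x + a ∈ Z := by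
  simp only [commonZeros, mem_ofPred_eq, Fin.forall_fin_succ', Fin.snoc_castSucc, Fin.snoc_last]

theorem compl_commonZeros {ι A : Type*} [Add A] (Z : Set A) (α : ι → A) :
    (commonZeros Z α)ᶜ = ⋃ i, (· + α i) ⁻¹' Zᶜ := by
  ext x
  simp only [commonZeros, mem_compl_iff, mem_ofPred_eq, not_forall, mem_iUnion, mem_preimage]

theorem mk_compl_commonZeros_le {A : Type*} [AddGroup A] (Z : Set A) {n : ℕ} (α : Fin n → A) :
    #((commonZeros Z α)ᶜ : Set A) ≤ n * #(Zᶜ : Set A) := by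
  have card_translate (i : Fin n) : #((· + α i) ⁻¹' Zᶜ) = #(Zᶜ : Set A) :=
    Cardinal.mk_preimage_equiv (Equiv.addRight (α i)) Zᶜ
  rw [compl_commonZeros]
  simpa only [card_translate, Cardinal.sum_const, Cardinal.mk_fin, Cardinal.lift_natCast,
    Cardinal.lift_uzero] using
    Cardinal.mk_iUnion_le_sum_mk_lift (f := fun i => (· + α i) ⁻¹' Zᶜ)

namespace ZIndepSeq

variable {A : Type*} [AddCommGroup A] {Z : Set A} {n : ℕ}

theorem injective {α : Fin n → A} (h : ZIndepSeq Z α) : Injective α := by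
  obtain ⟨ψ, hψ, hψ_lt⟩ := h
  refine .of_lt_imp_ne fun j i hji hα => hψ i ?_
  exact hα ▸ hψ_lt i j hji

theorem snoc_iff {α : Fin n → A} {a : A} :
    ZIndepSeq Z (Fin.snoc α a : Fin (n + 1) → A) ↔
      ZIndepSeq Z α ∧ ∃ x ∈ commonZeros Z α, x + a ∉ Z := by
  constructor
  · rintro ⟨ψ, hψ, hψ_lt⟩
    simp only [Fin.forall_fin_succ', Fin.snoc_castSucc, Fin.snoc_last] at hψ hψ_lt
    exact ⟨⟨fun i => ψ i.castSucc, hψ.1, fun i j hji => (hψ_lt.1 i).1 j hji⟩,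
      ψ (Fin.last n), fun j => hψ_lt.2.1 j j.castSucc_lt_last, hψ.2⟩
  · rintro ⟨⟨ψ, hψ, hψ_lt⟩, x, hx, hxa⟩
    refine ⟨Fin.snoc ψ x, ?_, ?_⟩ <;>
      simp only [Fin.forall_fin_succ', Fin.snoc_castSucc, Fin.snoc_last]
    · exact ⟨hψ, hxa⟩
    · exact ⟨fun i => ⟨fun j hji => hψ_lt i j hji, fun h => absurd h (Fin.le_last _).not_gt⟩,
        fun j _ => hx j, fun h => absurd h (lt_irrefl _)⟩

theorem exists_snoc {α : Fin n → A} (h : ZIndepSeq Z α) (hα : (commonZeros Z α).Nonempty)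
    (hZ : Z ≠ univ) : ∃ a, ZIndepSeq Z (Fin.snoc α a : Fin (n + 1) → A) := by
  obtain ⟨x, hx⟩ := hα
  obtain ⟨z, hz⟩ := (ne_univ_iff_exists_notMem Z).1 hZ
  exact ⟨-x + z, snoc_iff.2 ⟨h, x, hx, by rwa [add_neg_cancel_left]⟩⟩

theorem exists_length_one (hZ : Z ≠ univ) : ∃ α : Fin 1 → A, ZIndepSeq Z α := by
  have nil : ZIndepSeq Z (Fin.elim0 : Fin 0 → A) := ⟨Fin.elim0, nofun, nofun⟩
  obtain ⟨a, ha⟩ := nil.exists_snoc ⟨0, nofun⟩ hZ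
  exact ⟨_, ha⟩

theorem add_mem_of_add_mem {α : Fin n → A} (h : ZIndepSeq Z α)
    (hmax : ∀ β : Fin (n + 2) → A, ¬ ZIndepSeq Z β) {c d : A} (hc : c ∈ commonZeros Z α)
    (hd : d ∈ commonZeros Z α) {a : A} (hda : d + a ∈ Z) : c + a ∈ Z := by
  by_contra hca
  have extended : ZIndepSeq Z (Fin.snoc α a : Fin (n + 1) → A) := snoc_iff.2 ⟨h, c, hc, hca⟩
  have hZ : Z ≠ univ := (ne_univ_iff_exists_notMem Z).2 ⟨_, hca⟩
  obtain ⟨b, hb⟩ := extended.exists_snoc ⟨d, mem_commonZeros_snoc.2 ⟨hd, hda⟩⟩ hZ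
  exact hmax _ hb

theorem sub_mem_stabilizer {α : Fin n → A} (h : ZIndepSeq Z α)
    (hmax : ∀ β : Fin (n + 2) → A, ¬ ZIndepSeq Z β) {c d : A} (hc : c ∈ commonZeros Z α)
    (hd : d ∈ commonZeros Z α) : c - d ∈ AddAction.stabilizer A Zᶜ := by
  refine AddAction.mem_stabilizer_set.2 fun b => ?_
  have translate_c : (c - d) +ᵥ b = c + (b - d) := by rw [vadd_eq_add]; abel
  have translate_d : b = d + (b - d) := (add_sub_cancel d b).symm
  rw [translate_c]
  nth_rw 2 [translate_d]
  exact not_congr ⟨h.add_mem_of_add_mem hmax hd hc, h.add_mem_of_add_mem hmax hc hd⟩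

theorem mk_commonZeros_le {α : Fin n → A} (h : ZIndepSeq Z α)
    (hmax : ∀ β : Fin (n + 2) → A, ¬ ZIndepSeq Z β) :
    #(commonZeros Z α) ≤ #(AddAction.stabilizer A Zᶜ) := by
  rcases isEmpty_or_nonempty (commonZeros Z α) with hempty | ⟨⟨d, hd⟩⟩
  · rw [Cardinal.mk_eq_zero]
    exact zero_le
  · refine Cardinal.mk_le_of_injective (f := fun c => ⟨c - d, h.sub_mem_stabilizer hmax c.2 hd⟩) ?_
    exact fun c c' hcc' => Subtype.ext (sub_left_injective (congrArg Subtype.val hcc'))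

end ZIndepSeq

theorem stmt_16_general {A : Type*} [AddCommGroup A] {Z : Set A} {n : ℕ}
    (hn : IsGreatest {s | ∃ α : Fin s → A, ZIndepSeq Z α} (n + 1)) :
    #A ≤ n * #(Zᶜ : Set A) + #(AddAction.stabilizer A Zᶜ) := by
  obtain ⟨⟨α, hα⟩, hmax⟩ := hn
  rw [← Fin.snoc_init_self α] at hα
  have hinit : ZIndepSeq Z (Fin.init α) := (ZIndepSeq.snoc_iff.1 hα).1
  have no_longer (β : Fin (n + 2) → A) : ¬ ZIndepSeq Z β := fun hβ =>
    (hmax ⟨β, hβ⟩).not_gt (Nat.lt_succ_self _)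
  rw [← Cardinal.mk_sum_compl (commonZeros Z (Fin.init α)), add_comm]
  exact add_le_add (mk_compl_commonZeros_le Z _) (hinit.mk_commonZeros_le no_longer)

end

/-- if `t` is the maximum length of a `Z`-independent sequence of distinct
elements of `A`, and `N = A \ Z` with stabilizer `H(N)`, then
`(t - 1)·|N| ≥ |A| - |H(N)|`. -/
theorem stmt_16 {A : Type*} [AddCommGroup A] [Fintype A]
    (Z : Set A) (hZ : Z ≠ Set.univ)
    (t : ℕ)
    (hex : ∃ α : Fin t → A, Function.Injective α ∧ ZIndepSeq Z α)
    (hmax : ∀ (s : ℕ) (α : Fin s → A), Function.Injective α → ZIndepSeq Z α → s ≤ t) :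
    (Fintype.card A : ℤ) - ({g : A | (fun x => g + x) '' Zᶜ = Zᶜ} : Set A).ncard ≤
      ((t : ℤ) - 1) * (Zᶜ : Set A).ncard := by
  have ht : IsGreatest {s | ∃ α : Fin s → A, ZIndepSeq Z α} t :=
    ⟨hex.imp fun _ => And.right, fun s ⟨α, hα⟩ => hmax s α hα.injective hα⟩
  obtain ⟨n, rfl⟩ := Nat.exists_eq_add_of_le' (ht.2 (ZIndepSeq.exists_length_one hZ))
  have hle := stmt_16_general ht
  change _ ≤ _ + Cardinal.mk ({g : A | (fun x => g + x) '' Zᶜ = Zᶜ} : Set A) at hle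
  rw [Cardinal.mk_fintype, ← Set.cast_ncard (toFinite _), ← Set.cast_ncard (toFinite _)] at hle
  norm_cast at hle
  push_cast
  lia
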